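/- Let b ∈ ℕ⁺, τ = τ_RZPT^b, let A be a TS with event set E = {e₁,…,e_n}, let A' be a spanning tree of A, and let s₁ −e→ s'₁, …, s_k −e→ s'_k be exactly the e-labeled transitions of A (k ≥ 1). An ESSA (e, s) of A (so δ(s,e) is undefined, i.e., s ∉ {s₁,…,s_k}) is solved by some τ-region of A if and only if there exist a pair event (m,n) ∈ E_τ and an abstract τ-region (sup, abs) of A such that: (1) abs(e) ≡ −m + n (mod b+1); (2) ψ_{s₁}·abs ≡ m − sup(ι) (mod b+1); (3) (ψ_{s₁} − ψ_{sᵢ})·abs ≡ 0 (mod b+1) for all i ∈ {2,…,k}; and (4) (ψ_{s₁} − ψ_s)·abs ≢ 0 (mod b+1). -/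

import Mathlib

namespace PNS

/-- Events of a (b-bounded) type of nets: either a pair `(m,n)` or a group element `z ∈ {0,…,b}`. -/
inductive BEvent : Type
  | pair : ℕ → ℕ → BEvent
  | num : ℕ → BEvent
  deriving DecidableEq

/-- A type of nets `τ = (S_τ, E_τ, δ_τ)` with `S_τ ⊆ ℕ`. -/
structure NetType : Type where
  states : Set ℕ
  events : Set BEvent
  delta : ℕ → BEvent → Option ℕ

def deltaPT (b : ℕ) : ℕ → BEvent → Option ℕ
  | s, .pair m n => if m ≤ s ∧ s - m + n ≤ b then some (s - m + n) else none
  | _, .num _ => none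

def deltaZPT (b : ℕ) : ℕ → BEvent → Option ℕ
  | s, .pair m n => if m ≤ s ∧ s - m + n ≤ b then some (s - m + n) else none
  | s, .num z => some ((s + z) % (b + 1))

def deltaRZPT (b : ℕ) : ℕ → BEvent → Option ℕ
  | s, .pair m n => if s = m ∧ n ≤ b then some n else none
  | s, .num z => some ((s + z) % (b + 1))

/-- The type of `b`-bounded P/T-nets. -/
def tauPT (b : ℕ) : NetType :=
  ⟨{s | s ≤ b}, {e | ∃ m n, e = BEvent.pair m n ∧ m ≤ b ∧ n ≤ b}, deltaPT b⟩

/-- The type of pure `b`-bounded P/T-nets. -/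
def tauPPT (b : ℕ) : NetType :=
  ⟨{s | s ≤ b}, {e | ∃ m n, e = BEvent.pair m n ∧ m ≤ b ∧ n ≤ b ∧ (m = 0 ∨ n = 0)}, deltaPT b⟩

/-- The type of `ℤ_{b+1}`-extended `b`-bounded P/T-nets. -/
def tauZPT (b : ℕ) : NetType :=
  ⟨{s | s ≤ b},
   {e | (∃ m n, e = BEvent.pair m n ∧ m ≤ b ∧ n ≤ b ∧ ¬(m = 0 ∧ n = 0)) ∨
        (∃ z, e = BEvent.num z ∧ z ≤ b)}, deltaZPT b⟩

/-- The type of pure `ℤ_{b+1}`-extended `b`-bounded P/T-nets. -/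
def tauZPPT (b : ℕ) : NetType :=
  ⟨{s | s ≤ b},
   {e | (∃ m n, e = BEvent.pair m n ∧ m ≤ b ∧ n ≤ b ∧ ¬(m = 0 ∧ n = 0) ∧ (m = 0 ∨ n = 0)) ∨
        (∃ z, e = BEvent.num z ∧ z ≤ b)}, deltaZPT b⟩

/-- The type of restricted `ℤ_{b+1}`-extended `b`-bounded P/T-nets. -/
def tauRZPT (b : ℕ) : NetType :=
  ⟨{s | s ≤ b},
   {e | (∃ m n, e = BEvent.pair m n ∧ m ≤ b ∧ n ≤ b ∧ ¬(m = 0 ∧ n = 0)) ∨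
        (∃ z, e = BEvent.num z ∧ z ≤ b)}, deltaRZPT b⟩

/-- A (deterministic, initialized) transition system with states `S`, events `E`. -/
structure TS (S E : Type) : Type where
  delta : S → E → Option S
  init : S

def TS.Reachable {S E : Type} (A : TS S E) (s : S) : Prop :=
  Relation.ReflTransGen (fun x y => ∃ e, A.delta x e = some y) A.init s

/-- Every state is reachable from the initial state. -/
def TS.Initialized {S E : Type} (A : TS S E) : Prop :=
  ∀ s, A.Reachable s

/-- A `τ`-region `(sup, sig)` of a TS `A`. -/
structure IsRegion (τ : NetType) {S E : Type} (A : TS S E)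
    (sup : S → ℕ) (sig : E → BEvent) : Prop where
  sup_mem : ∀ s, sup s ∈ τ.states
  sig_mem : ∀ e, sig e ∈ τ.events
  edge : ∀ s e s', A.delta s e = some s' → τ.delta (sup s) (sig e) = some (sup s')

/-- `A` has the `τ`-state separation property. -/
def HasSSP (τ : NetType) {S E : Type} (A : TS S E) : Prop :=
  ∀ s s' : S, s ≠ s' → ∃ sup sig, IsRegion τ A sup sig ∧ sup s ≠ sup s'

/-- `A` has the `τ`-event state separation property. -/
def HasESSP (τ : NetType) {S E : Type} (A : TS S E) : Prop :=
  ∀ (e : E) (s : S), A.delta s e = none →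
    ∃ sup sig, IsRegion τ A sup sig ∧ τ.delta (sup s) (sig e) = none

def Solvable (τ : NetType) {S E : Type} (A : TS S E) : Prop :=
  HasESSP τ A ∧ HasSSP τ A

def sigMinus : BEvent → ℕ
  | .pair m _ => m
  | .num _ => 0

def sigPlus : BEvent → ℕ
  | .pair _ n => n
  | .num _ => 0

def sigAbs : BEvent → ℕ
  | .pair _ _ => 0
  | .num z => z

open Classical in
/-- The linear TS `s₀ −ev 0→ s₁ −ev 1→ … −ev (m-1)→ s_m` on the `m+1` pairwise
distinct states `Fin (m+1)` with initial state `0`. -/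
noncomputable def linTS {E : Type} (m : ℕ) (ev : ℕ → E) : TS (Fin (m + 1)) E where
  init := ⟨0, Nat.succ_pos m⟩
  delta s e :=
    if h : (s : ℕ) < m ∧ ev (s : ℕ) = e then some ⟨(s : ℕ) + 1, Nat.succ_lt_succ h.1⟩
    else none

/-- The linear TS whose sequence of edge labels is the list `l`. -/
noncomputable def linOfList {E : Type} (l : List E) (d : E) : TS (Fin (l.length + 1)) E :=
  linTS l.length (fun i => l.getD i d)

/-- A spanning tree of `A`, represented by the parent function of the tree,
a depth function witnessing well-foundedness, and the Parikh vectors `count s`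
of the unique tree paths from the initial state to the states. -/
structure SpanTree {S E : Type} [DecidableEq E] (A : TS S E) : Type where
  parent : S → Option (S × E)
  depth : S → ℕ
  count : S → E → ℕ
  parent_init : parent A.init = none
  parent_ne : ∀ s, s ≠ A.init → ∃ p e, parent s = some (p, e)
  parent_edge : ∀ s p e, parent s = some (p, e) → A.delta p e = some s
  depth_lt : ∀ s p e, parent s = some (p, e) → depth p < depth s
  count_init : ∀ e, count A.init e = 0
  count_parent : ∀ s p e0 e, parent s = some (p, e0) →
    count s e = count p e + (if e = e0 then 1 else 0)

/-- `abs` is an abstract signature of `A` (w.r.t. the bound `b`): some support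
`sup` turns it into an abstract region, i.e. `sup s' = sup s + abs e (mod b+1)`
for every edge `s −e→ s'`. -/
def AbstractSig (b : ℕ) {S E : Type} (A : TS S E) (abs : E → ZMod (b + 1)) : Prop :=
  ∃ sup : S → ZMod (b + 1), ∀ s e s', A.delta s e = some s' → sup s' = sup s + abs e

/-- `s −e→ s'` is a chord of the spanning tree `T`: an edge of `A` that is not a tree edge. -/
def IsChord {S E : Type} [DecidableEq E] {A : TS S E} (T : SpanTree A)
    (s : S) (e : E) (s' : S) : Prop :=
  A.delta s e = some s' ∧ T.parent s' ≠ some (s, e)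

/-- The fundamental cycle `ψ_t` of the chord `t = s −e→ s'`, evaluated at the event `e'`. -/
noncomputable def fundCycle (b : ℕ) {S E : Type} [DecidableEq E] {A : TS S E}
    (T : SpanTree A) (s : S) (e : E) (s' : S) (e' : E) : ZMod (b + 1) :=
  ((T.count s e' : ZMod (b + 1)) - (T.count s' e' : ZMod (b + 1))) +
    (if e' = e then 1 else 0)

/-!
A pair event `(m, n)` fires only at support `m`, where it has the effect of the group element
`n - m`. Hence replacing every signature value by its effect in `ℤ_{b+1}` turns a region into an
abstract region with the same support. Conversely, an abstract region with `abs e = n - m` whose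
support is `m` at every source of `e` remains a region when `e` is given the signature `(m, n)`,
and it then disables `e` at every state with support different from `m`. Along the spanning tree
the support of an abstract region is determined by `sup t = sup ι + ψ_t · abs`, so these conditions
on the support are linear conditions on Parikh vectors.
-/

section RestrictedType

variable {b : ℕ}

theorem natCast_eq_natCast_iff_of_le {x y : ℕ} (hx : x ≤ b) (hy : y ≤ b) :
    (x : ZMod (b + 1)) = y ↔ x = y :=
  (CharP.natCast_injOn_Iio (ZMod (b + 1)) (b + 1)).eq_iff
    (Nat.lt_succ_of_le hx) (Nat.lt_succ_of_le hy)

theorem pair_mem_events_tauRZPT {m n : ℕ} :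
    .pair m n ∈ (tauRZPT b).events ↔ m ≤ b ∧ n ≤ b ∧ ¬(m = 0 ∧ n = 0) := by
  simp [tauRZPT]

theorem num_mem_events_tauRZPT {z : ℕ} : .num z ∈ (tauRZPT b).events ↔ z ≤ b := by
  simp [tauRZPT]

theorem tauRZPT_delta_pair_eq_some {x m n y : ℕ} :
    (tauRZPT b).delta x (.pair m n) = some y ↔ (x = m ∧ n ≤ b) ∧ n = y := by
  simp [tauRZPT, deltaRZPT]

theorem tauRZPT_delta_pair_eq_none {x m n : ℕ} (hn : n ≤ b) :
    (tauRZPT b).delta x (.pair m n) = none ↔ x ≠ m := by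
  simp [tauRZPT, deltaRZPT, hn]

theorem tauRZPT_delta_num_ne_none (x z : ℕ) : (tauRZPT b).delta x (.num z) ≠ none :=
  Option.some_ne_none _

theorem tauRZPT_delta_num_eq_some {x z y : ℕ} (hy : y ≤ b) :
    (tauRZPT b).delta x (.num z) = some y ↔ (y : ZMod (b + 1)) = x + z := by
  rw [← Nat.cast_add, eq_comm (a := (y : ZMod (b + 1))), ZMod.natCast_eq_natCast_iff',
    Nat.mod_eq_of_lt (Nat.lt_succ_of_le hy)]
  exact Option.some_inj

/-- The change modulo `b + 1` that a net event causes to the support: `-m + n` for a pair event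
`(m, n)`, and `z` for a group event `z`. -/
def effect (b : ℕ) : BEvent → ZMod (b + 1)
  | .pair m n => n - m
  | .num z => z

theorem natCast_eq_add_effect {x y : ℕ} {ev : BEvent} (hy : y ≤ b)
    (h : (tauRZPT b).delta x ev = some y) : (y : ZMod (b + 1)) = x + effect b ev := by
  cases ev with
  | pair m n =>
    obtain ⟨⟨rfl, -⟩, rfl⟩ := tauRZPT_delta_pair_eq_some.1 h
    exact (add_sub_cancel _ _).symm
  | num z => exact (tauRZPT_delta_num_eq_some hy).1 h

end RestrictedType

section AbstractRegion

variable {b : ℕ} {S E : Type} {A : TS S E} {sup : S → ℕ}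

/-- `(sup, abs)` is an abstract region for `τ_RZPT^b`: a region all of whose signature values are
group events. -/
abbrev IsAbstractRegion (b : ℕ) (A : TS S E) (sup : S → ℕ) (abs : E → ℕ) : Prop :=
  IsRegion (tauRZPT b) A sup fun e => .num (abs e)

theorem IsAbstractRegion.natCast_sup {abs : E → ℕ} (h : IsAbstractRegion b A sup abs)
    {t t' : S} {e : E} (ht : A.delta t e = some t') : (sup t' : ZMod (b + 1)) = sup t + abs e :=
  (tauRZPT_delta_num_eq_some (h.sup_mem t')).1 (h.edge t e t' ht)

theorem IsRegion.isAbstractRegion_effect {sig : E → BEvent}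
    (h : IsRegion (tauRZPT b) A sup sig) :
    IsAbstractRegion b A sup fun e => (effect b (sig e)).val where
  sup_mem := h.sup_mem
  sig_mem _ := num_mem_events_tauRZPT.2 (Nat.le_of_lt_succ (ZMod.val_lt _))
  edge t e t' ht := by
    rw [tauRZPT_delta_num_eq_some (h.sup_mem t'), ZMod.natCast_zmod_val]
    exact natCast_eq_add_effect (h.sup_mem t') (h.edge t e t' ht)

theorem IsAbstractRegion.isRegion_update_pair [DecidableEq E] {abs : E → ℕ} {e : E} {m n : ℕ}
    (h : IsAbstractRegion b A sup abs) (hmn : .pair m n ∈ (tauRZPT b).events)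
    (habs : (abs e : ZMod (b + 1)) = n - m)
    (hsup : ∀ t t', A.delta t e = some t' → sup t = m) :
    IsRegion (tauRZPT b) A sup (Function.update (fun e' => .num (abs e')) e (.pair m n)) where
  sup_mem := h.sup_mem
  sig_mem e' := by
    obtain rfl | hne := eq_or_ne e' e
    · rwa [Function.update_self]
    · rw [Function.update_of_ne hne]
      exact h.sig_mem e'
  edge t e' t' ht := by
    obtain rfl | hne := eq_or_ne e' e
    · have hn : n ≤ b := (pair_mem_events_tauRZPT.1 hmn).2.1
      have hcast : (n : ZMod (b + 1)) = sup t' := by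
        rw [h.natCast_sup ht, habs, hsup t t' ht, add_sub_cancel]
      rw [Function.update_self, tauRZPT_delta_pair_eq_some]
      exact ⟨⟨hsup t t' ht, hn⟩, (natCast_eq_natCast_iff_of_le hn (h.sup_mem t')).1 hcast⟩
    · rw [Function.update_of_ne hne]
      exact h.edge t e' t' ht

theorem exists_isRegion_delta_eq_none_iff (A : TS S E) (e : E) (s : S) :
    (∃ sup sig, IsRegion (tauRZPT b) A sup sig ∧ (tauRZPT b).delta (sup s) (sig e) = none) ↔
      ∃ m n : ℕ, .pair m n ∈ (tauRZPT b).events ∧ ∃ sup abs, IsAbstractRegion b A sup abs ∧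
        (abs e : ZMod (b + 1)) = n - m ∧
        (∀ t t', A.delta t e = some t' → sup t = m) ∧ sup s ≠ m := by
  classical
  constructor
  · rintro ⟨sup, sig, hR, hnone⟩
    obtain ⟨m, n, hsig⟩ : ∃ m n, sig e = .pair m n := by
      cases hsig : sig e with
      | pair m n => exact ⟨m, n, rfl⟩
      | num z => exact absurd (hsig ▸ hnone) (tauRZPT_delta_num_ne_none _ _)
    have hmn : .pair m n ∈ (tauRZPT b).events := hsig ▸ hR.sig_mem e
    refine ⟨m, n, hmn, sup, _, hR.isAbstractRegion_effect, ?_, fun t t' ht => ?_, ?_⟩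
    · rw [ZMod.natCast_zmod_val, hsig, effect]
    · have hedge := hR.edge t e t' ht
      rw [hsig, tauRZPT_delta_pair_eq_some] at hedge
      exact hedge.1.1
    · rwa [hsig, tauRZPT_delta_pair_eq_none (pair_mem_events_tauRZPT.1 hmn).2.1] at hnone
  · rintro ⟨m, n, hmn, sup, abs, hR, habs, hsup, hs⟩
    refine ⟨sup, _, hR.isRegion_update_pair hmn habs hsup, ?_⟩
    rwa [Function.update_self, tauRZPT_delta_pair_eq_none (pair_mem_events_tauRZPT.1 hmn).2.1]

end AbstractRegion

section SpanningTree

variable {b : ℕ} {S E : Type} [Fintype E] [DecidableEq E] {A : TS S E} {sup : S → ℕ}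
  {abs : E → ℕ}

theorem SpanTree.eq_add_sum_count_nsmul {M : Type*} [AddCommMonoid M] (T : SpanTree A)
    {f : S → M} {w : E → M}
    (hf : ∀ p e t, T.parent t = some (p, e) → f t = f p + w e) (t : S) :
    f t = f A.init + ∑ e, T.count t e • w e := by
  induction hd : T.depth t using Nat.strong_induction_on generalizing t with
  | _ d ih =>
    obtain rfl | ht := eq_or_ne t A.init
    · simp [T.count_init]
    · obtain ⟨p, e, hp⟩ := T.parent_ne t ht
      have hfp := ih _ (hd ▸ T.depth_lt t p e hp) p rfl
      have hsum : ∑ e', T.count t e' • w e' = ∑ e', T.count p e' • w e' + w e := by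
        simp [T.count_parent t p e _ hp, add_smul, Finset.sum_add_distrib]
      rw [hf p e t hp, hfp, hsum, add_assoc]

theorem IsAbstractRegion.sum_count_mul (h : IsAbstractRegion b A sup abs) (T : SpanTree A)
    (t : S) : ∑ e, (T.count t e : ZMod (b + 1)) * abs e = sup t - sup A.init := by
  have hsup := T.eq_add_sum_count_nsmul (f := fun t => (sup t : ZMod (b + 1)))
    (w := fun e => (abs e : ZMod (b + 1)))
    (fun p e t hp => h.natCast_sup (T.parent_edge t p e hp)) t
  simp only [nsmul_eq_mul] at hsup
  exact eq_sub_of_add_eq' hsup.symm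

theorem IsAbstractRegion.sum_count_sub_count_mul (h : IsAbstractRegion b A sup abs)
    (T : SpanTree A) (t u : S) :
    ∑ e, ((T.count t e : ZMod (b + 1)) - T.count u e) * abs e = sup t - sup u := by
  simp only [sub_mul, Finset.sum_sub_distrib, h.sum_count_mul, sub_sub_sub_cancel_right]

theorem IsAbstractRegion.sum_count_mul_eq_sub_iff (h : IsAbstractRegion b A sup abs)
    (T : SpanTree A) {t : S} {m : ℕ} (hm : m ≤ b) :
    ∑ e, (T.count t e : ZMod (b + 1)) * abs e = m - sup A.init ↔ sup t = m := by
  rw [h.sum_count_mul, sub_left_inj, natCast_eq_natCast_iff_of_le (h.sup_mem t) hm]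

theorem IsAbstractRegion.sum_count_sub_count_mul_eq_zero_iff (h : IsAbstractRegion b A sup abs)
    (T : SpanTree A) {t u : S} :
    ∑ e, ((T.count t e : ZMod (b + 1)) - T.count u e) * abs e = 0 ↔ sup t = sup u := by
  rw [h.sum_count_sub_count_mul, sub_eq_zero,
    natCast_eq_natCast_iff_of_le (h.sup_mem t) (h.sup_mem u)]

theorem IsAbstractRegion.sum_count_conditions_iff_forall_sup_eq
    (h : IsAbstractRegion b A sup abs) (T : SpanTree A) {ι : Type*}
    (src : ι → S) (i₀ : ι) (s : S) {m : ℕ} (hm : m ≤ b) :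
    (∑ e, (T.count (src i₀) e : ZMod (b + 1)) * abs e = m - sup A.init ∧
      (∀ i, ∑ e, ((T.count (src i₀) e : ZMod (b + 1)) - T.count (src i) e) * abs e = 0) ∧
      ∑ e, ((T.count (src i₀) e : ZMod (b + 1)) - T.count s e) * abs e ≠ 0) ↔
      (∀ i, sup (src i) = m) ∧ sup s ≠ m := by
  simp only [h.sum_count_mul_eq_sub_iff T hm, ne_eq, h.sum_count_sub_count_mul_eq_zero_iff T]
  constructor
  · rintro ⟨rfl, hsrc, hs⟩
    exact ⟨fun i => (hsrc i).symm, fun h => hs h.symm⟩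
  · rintro ⟨hsrc, hs⟩
    exact ⟨hsrc i₀, fun i => (hsrc i₀).trans (hsrc i).symm, fun h => hs (h.symm.trans (hsrc i₀))⟩

end SpanningTree

/-- Let `τ = τ_RZPT^b`, let `T` be a spanning tree of `A`, and let
`src 0 −e→ ·, …, src (k-1) −e→ ·` be exactly the `e`-labeled transitions of `A`.
An ESSA `(e, s)` of `A` is solved by some `τ`-region of `A` iff there are a pair
event `(m,n) ∈ E_τ` and an abstract `τ`-region `(sup, abs)` of `A` such that
(1) `abs(e) ≡ −m+n`, (2) `ψ_{s₁}·abs ≡ m − sup(ι)`, (3) `(ψ_{s₁}−ψ_{sᵢ})·abs ≡ 0`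
for all `i`, and (4) `(ψ_{s₁}−ψ_s)·abs ≢ 0` (all modulo `b+1`). -/
theorem stmt18 (b : ℕ) (hb : 1 ≤ b)
    {S E : Type} [Fintype E] [DecidableEq E] (A : TS S E) (hinit : A.Initialized)
    (T : SpanTree A) (e : E) (k : ℕ) (hk : 0 < k) (src : Fin k → S)
    (hinj : Function.Injective src)
    (hsrc : ∀ t : S, (∃ t', A.delta t e = some t') ↔ ∃ i, src i = t)
    (s : S) (hs : A.delta s e = none) :
    (∃ sup sig, IsRegion (tauRZPT b) A sup sig ∧
        (tauRZPT b).delta (sup s) (sig e) = none) ↔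
      ∃ m n : ℕ, m ≤ b ∧ n ≤ b ∧ ¬(m = 0 ∧ n = 0) ∧
        ∃ (sup : S → ℕ) (absN : E → ℕ),
          IsRegion (tauRZPT b) A sup (fun e' => BEvent.num (absN e')) ∧
          (absN e : ZMod (b + 1)) = (n : ZMod (b + 1)) - (m : ZMod (b + 1)) ∧
          (∑ e' : E, (T.count (src ⟨0, hk⟩) e' : ZMod (b + 1)) * (absN e' : ZMod (b + 1))) =
            (m : ZMod (b + 1)) - (sup A.init : ZMod (b + 1)) ∧
          (∀ i : Fin k,
            (∑ e' : E, ((T.count (src ⟨0, hk⟩) e' : ZMod (b + 1)) -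
                (T.count (src i) e' : ZMod (b + 1))) * (absN e' : ZMod (b + 1))) = 0) ∧
          (∑ e' : E, ((T.count (src ⟨0, hk⟩) e' : ZMod (b + 1)) -
              (T.count s e' : ZMod (b + 1))) * (absN e' : ZMod (b + 1))) ≠ 0 := by
  have hsource : ∀ (sup : S → ℕ) (m : ℕ),
      (∀ t t', A.delta t e = some t' → sup t = m) ↔ ∀ i, sup (src i) = m := fun sup m => by
    simp only [← exists_imp, hsrc]
    exact Set.forall_mem_range
  rw [exists_isRegion_delta_eq_none_iff]
  simp only [pair_mem_events_tauRZPT, and_assoc, hsource]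
  refine exists₂_congr fun m n => and_congr_right fun hm => and_congr_right fun _ =>
    and_congr_right fun _ => exists₂_congr fun sup abs => and_congr_right fun hR =>
    and_congr_right fun _ => ?_
  exact (IsAbstractRegion.sum_count_conditions_iff_forall_sup_eq hR T src ⟨0, hk⟩ s hm).symm

end PNS
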